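/- arXiv:1203.2001 — 2 statements merged into one kernel-verified Lean document; each statement's English description precedes it below -/
import Mathlib

section
/- Let D ⊆ ℝⁿ (n ≥ 1) be a nonempty bounded convex open set. Hilbert's distance d_H is a metric on D: for all x, y, z ∈ D one has d_H(x,y) ≥ 0 with equality if and only if x = y, d_H(x,y) = d_H(y,x), and d_H(x,z) ≤ d_H(x,y) + d_H(y,z). -/
/-!
The Hilbert distance is the symmetrization of an asymmetric distance which is a maximum over
half-spaces. If the ray from `x` through `y` leaves `D` at `y' = x + t (y - x)`, put
`r(x, y) = t / (t - 1) = ‖x - y'‖ / ‖y - y'‖`; then `dH x y = (log r(x, y) + log r(y, x)) / 2`,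
which makes symmetry and positivity plain, as `r(x, y) > 1` for `x ≠ y`.

For the triangle inequality, `r(x, y)` is the greatest value of `(c - f x) / (c - f y)` over all
open half-spaces `{f < c}` containing `D` (`isGreatest_halfSpaceRatios`): every half-space gives a
value at most `t / (t - 1)` because `f y' ≤ c`, and a supporting half-space at `y'` attains it.
Since `(c - f x) / (c - f z)` is the product of `(c - f x) / (c - f y)` and `(c - f y) / (c - f z)`,
the maximum is submultiplicative: `r(x, z) ≤ r(x, y) r(y, z)`.
-/

/-- `dH` is the Hilbert distance of the bounded convex open set `D`: `dH x x = 0`, and for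
distinct `x, y ∈ D`, if `x'` and `y'` are the two points where the line through `x` and `y`
meets the frontier of `D`, labeled so that `x` lies strictly between `x'` and `y` and `y`
lies strictly between `x` and `y'`, then
`dH x y = (1/2) log ((‖x' − y‖ ‖x − y'‖)/(‖x' − x‖ ‖y − y'‖))`. -/
def IsHilbertDist {n : ℕ} (D : Set (EuclideanSpace ℝ (Fin n)))
    (dH : EuclideanSpace ℝ (Fin n) → EuclideanSpace ℝ (Fin n) → ℝ) : Prop :=
  (∀ x ∈ D, dH x x = 0) ∧
  ∀ x ∈ D, ∀ y ∈ D, x ≠ y → ∀ x' ∈ frontier D, ∀ y' ∈ frontier D, ∀ s t : ℝ,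
    s < 0 → 1 < t → x' = x + s • (y - x) → y' = x + t • (y - x) →
    dH x y = (1 / 2) * Real.log ((‖x' - y‖ * ‖x - y'‖) / (‖x' - x‖ * ‖y - y'‖))

/-- The ratios of the "distances" `c - f x` and `c - f y` of `x` and `y` to the boundary of an open
half-space `{f < c}`, over all such half-spaces containing `D`. The functional `f = 0` with `c > 0`
is allowed and contributes the ratio `1`. -/
def halfSpaceRatios {E : Type*} [NormedAddCommGroup E] [NormedSpace ℝ E] (D : Set E) (x y : E) :
    Set ℝ :=
  {r | ∃ (f : E →L[ℝ] ℝ) (c : ℝ), (∀ q ∈ D, f q < c) ∧ r = (c - f x) / (c - f y)}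

section

variable {E : Type*} [NormedAddCommGroup E] [NormedSpace ℝ E] {D : Set E}

/-- The ray from `x` through `y` leaves the bounded open set `D` strictly beyond `y`. -/
lemma exists_exit (hbdd : Bornology.IsBounded D) (hopen : IsOpen D) {x y : E}
    (hy : y ∈ D) (hxy : x ≠ y) : ∃ t : ℝ, 1 < t ∧ x + t • (y - x) ∈ frontier D := by
  have hconn : IsPreconnected ((fun t : ℝ => x + t • (y - x)) '' Set.Ici 1) :=
    isPreconnected_Ici.image _ (by fun_prop)
  have hpos : 0 < ‖y - x‖ := norm_pos_iff.2 (sub_ne_zero.2 hxy.symm)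
  obtain ⟨C, hC⟩ := hbdd.exists_norm_le
  have hin : (((fun t : ℝ => x + t • (y - x)) '' Set.Ici 1) ∩ D).Nonempty :=
    ⟨y, ⟨1, by simp, by simp⟩, hy⟩
  have hout : (((fun t : ℝ => x + t • (y - x)) '' Set.Ici 1) ∩ Dᶜ).Nonempty := by
    have hCx : 0 ≤ C + ‖x‖ := add_nonneg ((norm_nonneg y).trans (hC y hy)) (norm_nonneg x)
    have hT : 0 ≤ (C + ‖x‖) / ‖y - x‖ := by positivity
    -- beyond this parameter the point is farther than `C` from the origin
    refine ⟨_, ⟨(C + ‖x‖) / ‖y - x‖ + 1, by simpa using hT, rfl⟩, fun hmem => ?_⟩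
    have h1 := hC _ hmem
    have h2 : ‖((C + ‖x‖) / ‖y - x‖ + 1) • (y - x)‖ = C + ‖x‖ + ‖y - x‖ := by
      rw [norm_smul, Real.norm_of_nonneg (by linarith)]
      field_simp
    have h3 := norm_sub_le (x + ((C + ‖x‖) / ‖y - x‖ + 1) • (y - x)) x
    rw [add_sub_cancel_left, h2] at h3
    linarith
  have hmeet : (((fun t : ℝ => x + t • (y - x)) '' Set.Ici 1) ∩ frontier D).Nonempty := by
    by_contra hempty
    rw [Set.not_nonempty_iff_eq_empty, hopen.frontier_eq] at hempty
    -- a ray missing the frontier would be separated by `D` and the complement of its closure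
    obtain ⟨q, -, hq, hq'⟩ := hconn D (closure D)ᶜ hopen isClosed_closure.isOpen_compl
      (fun q hq => or_iff_not_imp_left.2 fun hqD hqc =>
        (hempty ▸ (⟨hq, hqc, hqD⟩ : q ∈ _ ∩ (closure D \ D)) : q ∈ (∅ : Set E)))
      hin (hout.mono fun q hq => ⟨hq.1, fun hqc =>
        (hempty ▸ (⟨hq.1, hqc, hq.2⟩ : q ∈ _ ∩ (closure D \ D)) : q ∈ (∅ : Set E))⟩)
    exact hq' (subset_closure hq)
  obtain ⟨_, ⟨t, ht, rfl⟩, hfr⟩ := hmeet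
  refine ⟨t, lt_of_le_of_ne ht ?_, hfr⟩
  rintro rfl
  rw [hopen.frontier_eq] at hfr
  exact hfr.2 (by simpa using hy)

lemma isGreatest_halfSpaceRatios (hconv : Convex ℝ D) (hopen : IsOpen D) {x y : E}
    (hy : y ∈ D) {t : ℝ} (ht : 1 < t) (hfr : x + t • (y - x) ∈ frontier D) :
    IsGreatest (halfSpaceRatios D x y) (t / (t - 1)) := by
  have ht' : 0 < t - 1 := sub_pos.2 ht
  constructor
  · have hnot : x + t • (y - x) ∉ D := by
      rw [hopen.frontier_eq] at hfr
      exact hfr.2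
    obtain ⟨f, hf⟩ := geometric_hahn_banach_open_point hconv hopen hnot
    refine ⟨f, _, hf, ?_⟩
    have h := hf y hy
    rw [div_eq_div_iff ht'.ne' (sub_pos.2 h).ne']
    simp only [map_add, map_smul, map_sub, smul_eq_mul]
    ring
  · rintro _ ⟨f, c, hf, rfl⟩
    have hle : f (x + t • (y - x)) ≤ c :=
      closure_minimal (fun q hq => (hf q hq).le) (isClosed_le f.continuous continuous_const)
        (frontier_subset_closure hfr)
    simp only [map_add, map_smul, map_sub, smul_eq_mul] at hle
    rw [div_le_div_iff₀ (sub_pos.2 (hf y hy)) ht']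
    linarith

lemma isGreatest_halfSpaceRatios_self {x : E} (hx : x ∈ D) :
    IsGreatest (halfSpaceRatios D x x) 1 := by
  constructor
  · exact ⟨0, 1, by simp, by simp⟩
  · rintro _ ⟨f, c, hf, rfl⟩
    rw [div_self (sub_pos.2 (hf x hx)).ne']

lemma exists_isGreatest_halfSpaceRatios (hbdd : Bornology.IsBounded D) (hconv : Convex ℝ D)
    (hopen : IsOpen D) {x y : E} (hy : y ∈ D) :
    ∃ r, IsGreatest (halfSpaceRatios D x y) r ∧ 1 ≤ r ∧ (x ≠ y → 1 < r) := by
  rcases eq_or_ne x y with rfl | hxy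
  · exact ⟨1, isGreatest_halfSpaceRatios_self hy, le_rfl, fun h => absurd rfl h⟩
  · obtain ⟨t, ht, hfr⟩ := exists_exit hbdd hopen hy hxy
    have h1 : 1 < t / (t - 1) := by
      rw [one_lt_div (sub_pos.2 ht)]
      linarith
    exact ⟨_, isGreatest_halfSpaceRatios hconv hopen hy ht hfr, h1.le, fun _ => h1⟩

/-- The maximal half-space ratio is submultiplicative: a half-space attaining the maximum for
`x, z` is a competitor for both `x, y` and `y, z`. -/
lemma halfSpaceRatios_submul {x y z : E} (hx : x ∈ D) (hy : y ∈ D) (hz : z ∈ D) {a b r : ℝ}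
    (ha : IsGreatest (halfSpaceRatios D x y) a) (hb : IsGreatest (halfSpaceRatios D y z) b)
    (hr : IsGreatest (halfSpaceRatios D x z) r) : r ≤ a * b := by
  obtain ⟨f, c, hf, rfl⟩ := hr.1
  have hx' := sub_pos.2 (hf x hx)
  have hy' := sub_pos.2 (hf y hy)
  have hz' := sub_pos.2 (hf z hz)
  have h1 : (c - f x) / (c - f y) ≤ a := ha.2 ⟨f, c, hf, rfl⟩
  have h2 : (c - f y) / (c - f z) ≤ b := hb.2 ⟨f, c, hf, rfl⟩
  calc (c - f x) / (c - f z) = (c - f x) / (c - f y) * ((c - f y) / (c - f z)) := by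
        field_simp
    _ ≤ a * b := mul_le_mul h1 h2 (by positivity) ((div_pos hx' hy').le.trans h1)

end

/-- The Hilbert distance is the symmetrized logarithm of the maximal half-space ratio. -/
lemma IsHilbertDist.eq_log {n : ℕ} {D : Set (EuclideanSpace ℝ (Fin n))}
    (hbdd : Bornology.IsBounded D) (hconv : Convex ℝ D) (hopen : IsOpen D)
    {dH : EuclideanSpace ℝ (Fin n) → EuclideanSpace ℝ (Fin n) → ℝ}
    (hdH : IsHilbertDist D dH) {x y : EuclideanSpace ℝ (Fin n)} (hx : x ∈ D) (hy : y ∈ D)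
    {a b : ℝ} (ha : IsGreatest (halfSpaceRatios D x y) a)
    (hb : IsGreatest (halfSpaceRatios D y x) b) :
    dH x y = (1 / 2) * (Real.log a + Real.log b) := by
  rcases eq_or_ne x y with rfl | hxy
  · rw [hdH.1 x hx, ha.unique (isGreatest_halfSpaceRatios_self hx),
      hb.unique (isGreatest_halfSpaceRatios_self hx)]
    simp
  · obtain ⟨t, ht, hfr⟩ := exists_exit hbdd hopen hy hxy
    obtain ⟨u, hu, hfr'⟩ := exists_exit hbdd hopen hx hxy.symm
    rw [ha.unique (isGreatest_halfSpaceRatios hconv hopen hy ht hfr),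
      hb.unique (isGreatest_halfSpaceRatios hconv hopen hx hu hfr')]
    -- `y + u (x - y) = x + (1 - u) (y - x)`, so the exit point behind `x` has parameter `1 - u`
    rw [hdH.2 x hx y hy hxy _ hfr' _ hfr (1 - u) t (by linarith) ht (by module) rfl]
    have hpos : 0 < ‖y - x‖ := norm_pos_iff.2 (sub_ne_zero.2 hxy.symm)
    have ht' : 0 < t - 1 := sub_pos.2 ht
    have hu' : 0 < u - 1 := sub_pos.2 hu
    have e1 : ‖y + u • (x - y) - y‖ = u * ‖y - x‖ := by
      rw [add_sub_cancel_left, norm_smul, Real.norm_of_nonneg (by linarith), norm_sub_rev]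
    have e2 : ‖x - (x + t • (y - x))‖ = t * ‖y - x‖ := by
      rw [norm_sub_rev, add_sub_cancel_left, norm_smul, Real.norm_of_nonneg (by linarith)]
    have e3 : ‖y + u • (x - y) - x‖ = (u - 1) * ‖y - x‖ := by
      rw [show y + u • (x - y) - x = (u - 1) • (x - y) by module, norm_smul,
        Real.norm_of_nonneg hu'.le, norm_sub_rev]
    have e4 : ‖y - (x + t • (y - x))‖ = (t - 1) * ‖y - x‖ := by
      rw [show y - (x + t • (y - x)) = (t - 1) • (x - y) by module, norm_smul,
        Real.norm_of_nonneg ht'.le, norm_sub_rev]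
    rw [e1, e2, e3, e4, ← Real.log_mul (by positivity) (by positivity)]
    congr 2
    field_simp

/-- Hilbert's distance is a metric on `D`. -/
theorem hilbertDist_is_metric {n : ℕ} (hn : 1 ≤ n)
    (D : Set (EuclideanSpace ℝ (Fin n))) (hne : D.Nonempty)
    (hbdd : Bornology.IsBounded D) (hconv : Convex ℝ D) (hopen : IsOpen D)
    (dH : EuclideanSpace ℝ (Fin n) → EuclideanSpace ℝ (Fin n) → ℝ)
    (hdH : IsHilbertDist D dH) :
    ∀ x ∈ D, ∀ y ∈ D, ∀ z ∈ D,
      (0 ≤ dH x y ∧ (dH x y = 0 ↔ x = y)) ∧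
      dH x y = dH y x ∧
      dH x z ≤ dH x y + dH y z := by
  intro x hx y hy z hz
  obtain ⟨a, ha, ha1, haxy⟩ := exists_isGreatest_halfSpaceRatios hbdd hconv hopen (x := x) hy
  obtain ⟨a', ha', ha1', -⟩ := exists_isGreatest_halfSpaceRatios hbdd hconv hopen (x := y) hx
  obtain ⟨b, hb, hb1, -⟩ := exists_isGreatest_halfSpaceRatios hbdd hconv hopen (x := y) hz
  obtain ⟨b', hb', hb1', -⟩ := exists_isGreatest_halfSpaceRatios hbdd hconv hopen (x := z) hy
  obtain ⟨r, hr, hr1, -⟩ := exists_isGreatest_halfSpaceRatios hbdd hconv hopen (x := x) hz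
  obtain ⟨r', hr', hr1', -⟩ := exists_isGreatest_halfSpaceRatios hbdd hconv hopen (x := z) hx
  have exy := hdH.eq_log hbdd hconv hopen hx hy ha ha'
  have eyx := hdH.eq_log hbdd hconv hopen hy hx ha' ha
  have eyz := hdH.eq_log hbdd hconv hopen hy hz hb hb'
  have exz := hdH.eq_log hbdd hconv hopen hx hz hr hr'
  have la := Real.log_nonneg ha1
  have la' := Real.log_nonneg ha1'
  refine ⟨⟨by rw [exy]; linarith, fun h => ?_, ?_⟩, by rw [exy, eyx, add_comm], ?_⟩
  · by_contra hxy
    have := Real.log_pos (haxy hxy)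
    linarith
  · rintro rfl
    exact hdH.1 x hx
  · have h1 := Real.log_le_log (by linarith) (halfSpaceRatios_submul hx hy hz ha hb hr)
    have h2 := Real.log_le_log (by linarith) (halfSpaceRatios_submul hz hy hx hb' ha' hr')
    rw [Real.log_mul (by linarith) (by linarith)] at h1 h2
    linarith
end

section
/- Let D ⊆ ℝⁿ (n ≥ 1) be a nonempty bounded convex open set. Line segments are minimizing for the Funk distance: for all x, z ∈ D and s ∈ [0,1], setting y := (1−s) • x + s • z, one has d_F(x,y) + d_F(y,z) = d_F(x,z). -/
/-!
For `x ≠ z` in `D`, the ray from `x` through `z` leaves the bounded set `D`, so by connectedness it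
meets the frontier at some `p = x + t • (z - x)` with `t > 1`. For `y` strictly between `x` and `z`,
the rays from `x` through `y` and from `y` through `z` also pass through `p`. Hence all three Funk
distances are computed with the same frontier point `p`, and the claim is
`log (‖x - p‖ / ‖y - p‖) + log (‖y - p‖ / ‖z - p‖) = log (‖x - p‖ / ‖z - p‖)`.
-/

/-- `dF` is the Funk distance of the bounded convex open set `D`: `dF x x = 0`, and for
distinct `x, y ∈ D`, if `y'` is the point where the ray from `x` through `y` meets the
frontier of `D`, then `dF x y = log (‖x − y'‖ / ‖y − y'‖)`. -/
def IsFunkDist {n : ℕ} (D : Set (EuclideanSpace ℝ (Fin n)))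
    (dF : EuclideanSpace ℝ (Fin n) → EuclideanSpace ℝ (Fin n) → ℝ) : Prop :=
  (∀ x ∈ D, dF x x = 0) ∧
  ∀ x ∈ D, ∀ y ∈ D, x ≠ y → ∀ y' ∈ frontier D, ∀ t : ℝ, 0 < t →
    y' = x + t • (y - x) → dF x y = Real.log (‖x - y'‖ / ‖y - y'‖)

/-- The ray from `x` through `z` hits the frontier beyond `z`, since it is connected and unbounded. -/
lemma exists_frontier_on_ray {E : Type*} [NormedAddCommGroup E] [NormedSpace ℝ E] {D : Set E}
    (hbdd : Bornology.IsBounded D) (hopen : IsOpen D) {x z : E} (hz : z ∈ D) (hxz : x ≠ z) :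
    ∃ t : ℝ, 1 < t ∧ x + t • (z - x) ∈ frontier D := by
  have hpre : IsPreconnected ((fun t : ℝ => x + t • (z - x)) '' Set.Ici 1) :=
    isPreconnected_Ici.image _ (by fun_prop)
  obtain ⟨R, hR⟩ := hbdd.exists_norm_le
  have hpos : 0 < ‖z - x‖ := norm_pos_iff.mpr (sub_ne_zero.mpr hxz.symm)
  have hin : (((fun t : ℝ => x + t • (z - x)) '' Set.Ici 1) ∩ D).Nonempty :=
    ⟨z, ⟨1, Set.self_mem_Ici, by simp⟩, hz⟩
  have hout : (((fun t : ℝ => x + t • (z - x)) '' Set.Ici 1) ∩ Dᶜ).Nonempty := by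
    -- For this parameter, `‖T • (z - x)‖ > R + ‖x‖`, so the point has norm exceeding `R`.
    set T : ℝ := 1 + (|R| + ‖x‖) / ‖z - x‖ with hT
    have hT1 : 1 ≤ T := le_add_of_nonneg_right (by positivity)
    refine ⟨x + T • (z - x), ⟨T, hT1, rfl⟩, fun hmem => ?_⟩
    have h1 := hR _ hmem
    have h2 : ‖T • (z - x)‖ ≤ ‖x + T • (z - x)‖ + ‖x‖ := by
      simpa using norm_sub_le (x + T • (z - x)) x
    have h3 : ‖T • (z - x)‖ = ‖z - x‖ + (|R| + ‖x‖) := by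
      rw [norm_smul, Real.norm_of_nonneg (by linarith), hT]
      field_simp
    linarith [le_abs_self R]
  obtain ⟨p, ⟨t, ht, rfl⟩, hp⟩ :
      (((fun t : ℝ => x + t • (z - x)) '' Set.Ici 1) ∩ frontier D).Nonempty := by
    -- Otherwise `D` and the complement of its closure would be open sets disconnecting the ray.
    by_contra hemp
    rw [Set.not_nonempty_iff_eq_empty] at hemp
    have hcl : ∀ q ∈ (fun t : ℝ => x + t • (z - x)) '' Set.Ici 1, q ∉ D → q ∈ (closure D)ᶜ := by
      intro q hq hqD hqc
      have : q ∈ ((fun t : ℝ => x + t • (z - x)) '' Set.Ici 1) ∩ frontier D :=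
        ⟨hq, by rw [hopen.frontier_eq]; exact ⟨hqc, hqD⟩⟩
      simp [hemp] at this
    obtain ⟨q, hq, hqD⟩ := hout
    obtain ⟨r, -, hrD, hrc⟩ := hpre D (closure D)ᶜ hopen isClosed_closure.isOpen_compl
      (fun q hq => (em (q ∈ D)).imp id (hcl q hq)) hin ⟨q, hq, hcl q hq hqD⟩
    exact hrc (subset_closure hrD)
  refine ⟨t, lt_of_le_of_ne ht ?_, hp⟩
  rintro rfl
  rw [hopen.frontier_eq] at hp
  exact hp.2 (by simpa using hz)

/-- Line segments are minimizing for the Funk distance. -/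
theorem funkDist_segment_minimizing {n : ℕ} (hn : 1 ≤ n)
    (D : Set (EuclideanSpace ℝ (Fin n))) (hne : D.Nonempty)
    (hbdd : Bornology.IsBounded D) (hconv : Convex ℝ D) (hopen : IsOpen D)
    (dF : EuclideanSpace ℝ (Fin n) → EuclideanSpace ℝ (Fin n) → ℝ)
    (hdF : IsFunkDist D dF) :
    ∀ x ∈ D, ∀ z ∈ D, ∀ s : ℝ, s ∈ Set.Icc (0 : ℝ) 1 →
      dF x ((1 - s) • x + s • z) + dF ((1 - s) • x + s • z) z = dF x z := by
  obtain ⟨hself, hdist⟩ := hdF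
  rintro x hx z hz s ⟨hs0, hs1⟩
  have hy : (1 - s) • x + s • z ∈ D := hconv hx hz (by linarith) hs0 (by ring)
  rcases eq_or_ne x z with rfl | hxz
  · have : (1 - s) • x + s • x = x := by module
    rw [this, hself x hx, add_zero]
  rcases hs0.eq_or_lt with rfl | hs0
  · simp [hself x hx]
  rcases hs1.eq_or_lt with rfl | hs1
  · simp [hself z hz]
  obtain ⟨t, ht, hp⟩ := exists_frontier_on_ray hbdd hopen hz hxz
  set p := x + t • (z - x) with hpdef
  set y := (1 - s) • x + s • z with hydef
  have hyx : y - x = s • (z - x) := by rw [hydef]; module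
  have hzy : z - y = (1 - s) • (z - x) := by rw [hydef]; module
  have hzx : z - x ≠ 0 := sub_ne_zero.mpr hxz.symm
  have h1s : 1 - s ≠ 0 := by linarith
  have hxy : x ≠ y := fun h => smul_ne_zero hs0.ne' hzx (by rw [← hyx, h, sub_self])
  have hyz : y ≠ z := fun h => smul_ne_zero h1s hzx (by rw [← hzy, h, sub_self])
  have hpD : p ∉ D := by
    rw [hopen.frontier_eq] at hp
    exact hp.2
  have hne' : ∀ w ∈ D, ‖w - p‖ ≠ 0 := fun w hw h =>
    hpD (sub_eq_zero.mp (norm_eq_zero.mp h) ▸ hw)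
  have e1 := hdist x hx y hy hxy p hp (t / s) (by positivity)
    (by rw [hyx, smul_smul, div_mul_cancel₀ _ hs0.ne'])
  have e2 := hdist y hy z hz hyz p hp ((t - s) / (1 - s))
    (div_pos (by linarith) (by linarith))
    (by rw [hzy, smul_smul, div_mul_cancel₀ _ h1s, hpdef, hydef]; module)
  have e3 := hdist x hx z hz hxz p hp t (by linarith) rfl
  rw [e1, e2, e3, Real.log_div (hne' x hx) (hne' y hy), Real.log_div (hne' y hy) (hne' z hz),
    Real.log_div (hne' x hx) (hne' z hz)]
  ring
end
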